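/- Let S = f(X) be a sufficient statistic for Y that achieves the minimum of I(X;T) over all sufficient statistics, i.e., I(X;S) ≤ I(X;T) for every sufficient statistic T = h(X). Then S is a minimal sufficient statistic: for every sufficient statistic T = h(X) there exists a function g with S = g(T) μ-almost surely. -/

import Mathlib

open MeasureTheory Real
open scoped Classical

noncomputable def prOf {Ω α : Type*} [MeasurableSpace Ω] (μ : Measure Ω) (X : Ω → α) (x : α) : ℝ :=
  (μ (X ⁻¹' {x})).toReal

noncomputable def entOf {Ω α : Type*} [MeasurableSpace Ω] [Fintype α] (μ : Measure Ω) (X : Ω → α) : ℝ :=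
  -∑ x, prOf μ X x * Real.log (prOf μ X x)

noncomputable def miOf {Ω α β : Type*} [MeasurableSpace Ω] [Fintype α] [Fintype β]
    (μ : Measure Ω) (X : Ω → α) (Y : Ω → β) : ℝ :=
  entOf μ X + entOf μ Y - entOf μ (fun ω => (X ω, Y ω))

/-- `X` and `Y` are conditionally independent given `S`:
`P(X=x, Y=y | S=s) = P(X=x | S=s) * P(Y=y | S=s)` whenever `P(S=s) > 0`. -/
def CondIndepGiven {Ω α β γ : Type*} [MeasurableSpace Ω] (μ : Measure Ω)
    (X : Ω → α) (Y : Ω → β) (S : Ω → γ) : Prop :=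
  ∀ (x : α) (y : β) (s : γ), 0 < prOf μ S s →
    prOf μ (fun ω => (X ω, Y ω, S ω)) (x, y, s) / prOf μ S s =
      (prOf μ (fun ω => (X ω, S ω)) (x, s) / prOf μ S s) *
      (prOf μ (fun ω => (Y ω, S ω)) (y, s) / prOf μ S s)

/-!
The conditional law `x ↦ P(Y = · | X = x)` is itself a statistic of `X`. Averaging over the fibres
of `h` shows that `h(X)` is sufficient exactly when this law is a function of `h` on the support of
`X`; so the law is a sufficient statistic, and a function of every other one. Since
`I(X; h(X)) = H(h(X))`, a sufficient `f(X)` of least mutual information has no more entropy than the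
law, although the law is a function of `f(X)`. But entropy is the mean of `-log` of the probability
of the fibre through `X`, and passing to a function of `f(X)` enlarges the fibres, strictly so with
positive probability unless `f` is conversely a function of the law on the support. Hence `f` is a
function of the law, and thereby of every sufficient statistic.
-/

/-- `g` factors through `f` on the set `A`: the variant of `Function.FactorsThrough` relative to a
set, used to compare statistics only at values that `X` takes with positive probability. -/
def FactorsThroughOn {α β γ : Type*} (g : α → γ) (f : α → β) (A : Set α) : Prop :=
  ∀ ⦃x⦄, x ∈ A → ∀ ⦃x'⦄, x' ∈ A → f x = f x' → g x = g x'

/-- The support of the law of a discrete random variable `X`: its values of positive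
probability. -/
def supportOf {Ω α : Type*} [MeasurableSpace Ω] (μ : Measure Ω) (X : Ω → α) : Set α :=
  {x | 0 < prOf μ X x}

/-- The conditional law `y ↦ P(Y = y | X = x)`, a function of `x` that will serve as a statistic
of `X`. It is zero for `x` outside the support of `X`. -/
noncomputable def condPrOf {Ω α β : Type*} [MeasurableSpace Ω] (μ : Measure Ω)
    (Y : Ω → β) (X : Ω → α) (x : α) (y : β) : ℝ :=
  prOf μ (fun ω => (Y ω, X ω)) (y, x) / prOf μ X x

section Factorization

variable {α β γ δ : Type*}

lemma FactorsThroughOn.trans {g : α → γ} {k : α → δ} {f : α → β} {A : Set α}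
    (hgk : FactorsThroughOn g k A) (hkf : FactorsThroughOn k f A) : FactorsThroughOn g f A :=
  fun _ hx _ hx' hff' => hgk hx hx' (hkf hx hx' hff')

lemma FactorsThroughOn.exists_eqOn_comp [Nonempty γ] {g : α → γ} {f : α → β} {A : Set α}
    (hgf : FactorsThroughOn g f A) : ∃ e : β → γ, Set.EqOn g (e ∘ f) A := by
  have hrestrict : Function.FactorsThrough (A.domRestrict g) (A.domRestrict f) :=
    fun x x' hff' => hgf x.2 x'.2 hff'
  obtain ⟨e, he⟩ := (Function.factorsThrough_iff _).1 hrestrict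
  exact ⟨e, fun x hx => congrFun he ⟨x, hx⟩⟩

lemma exists_fin_eq_iff_eq [Finite α] (φ : α → β) :
    ∃ (n : ℕ) (m : α → Fin n), ∀ x x', m x = m x' ↔ φ x = φ x' := by
  obtain ⟨n, ⟨e⟩⟩ := Finite.exists_equiv_fin (Set.range φ)
  exact ⟨n, fun x => e ⟨φ x, x, rfl⟩, fun x x' => e.injective.eq_iff.trans Subtype.mk_eq_mk⟩

end Factorization

section PointMass

variable {Ω α β γ : Type*} [MeasurableSpace Ω] {μ : Measure Ω}

lemma prOf_nonneg (X : Ω → α) (x : α) : 0 ≤ prOf μ X x :=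
  ENNReal.toReal_nonneg

lemma prOf_eq_zero_or_mem_supportOf (X : Ω → α) (x : α) : prOf μ X x = 0 ∨ x ∈ supportOf μ X :=
  (prOf_nonneg X x).eq_or_lt.imp_left Eq.symm

lemma ite_prOf_le_ite_prOf {X : Ω → α} {f : α → β} {k : α → γ}
    (hkf : FactorsThroughOn k f (supportOf μ X)) {x : α} (hx : x ∈ supportOf μ X) (x' : α) :
    (if f x' = f x then prOf μ X x' else 0) ≤ if k x' = k x then prOf μ X x' else 0 := by
  rcases prOf_eq_zero_or_mem_supportOf (μ := μ) X x' with hx' | hx'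
  · simp only [hx', ite_self, le_refl]
  · by_cases hff' : f x' = f x
    · rw [if_pos hff', if_pos (hkf hx' hx hff')]
    · rw [if_neg hff']
      exact ite_nonneg (prOf_nonneg X x') le_rfl

lemma prOf_comp_of_injective (X : Ω → α) {e : α → β} (he : Function.Injective e) (x : α) :
    prOf μ (fun ω => e (X ω)) (e x) = prOf μ X x := by
  have hpreimage : (fun ω => e (X ω)) ⁻¹' {e x} = X ⁻¹' {x} := by
    ext ω
    exact he.eq_iff
  rw [prOf, hpreimage, prOf]

lemma prOf_eq_zero_of_forall_ne {X : Ω → α} {x : α} (hx : ∀ ω, X ω ≠ x) : prOf μ X x = 0 := by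
  have hpreimage : X ⁻¹' {x} = ∅ := Set.eq_empty_of_forall_notMem hx
  rw [prOf, hpreimage, measure_empty, ENNReal.toReal_zero]

lemma prOf_restrict_preimage (Y : Ω → β) (y : β) {X : Ω → α} {x : α}
    (hx : MeasurableSet (X ⁻¹' {x})) :
    prOf (μ.restrict (Y ⁻¹' {y})) X x = prOf μ (fun ω => (Y ω, X ω)) (y, x) := by
  rw [prOf, prOf, Measure.restrict_apply hx, ← Set.singleton_prod_singleton, Set.mk_preimage_prod,
    Set.inter_comm]

variable [IsFiniteMeasure μ]

lemma prOf_le_prOf_comp (X : Ω → α) (h : α → β) (x : α) :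
    prOf μ X x ≤ prOf μ (fun ω => h (X ω)) (h x) :=
  measureReal_mono fun _ hω => congrArg h hω

lemma prOf_comp_pos {X : Ω → α} (h : α → β) {x : α} (hx : x ∈ supportOf μ X) :
    0 < prOf μ (fun ω => h (X ω)) (h x) :=
  hx.trans_le (prOf_le_prOf_comp X h x)

lemma ae_mem_supportOf [Countable α] (X : Ω → α) : ∀ᵐ ω ∂μ, X ω ∈ supportOf μ X := by
  have hnull : μ (⋃ x ∈ (supportOf μ X)ᶜ, X ⁻¹' {x}) = 0 :=
    (measure_biUnion_null_iff (Set.to_countable _)).2 fun x hx =>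
      (measureReal_eq_zero_iff).1 (le_antisymm (not_lt.1 hx) (prOf_nonneg X x))
  filter_upwards [measure_eq_zero_iff_ae_notMem.1 hnull] with ω hω
  by_contra hXω
  exact hω (Set.mem_biUnion hXω rfl)

lemma prOf_mul_condPrOf (Y : Ω → β) (X : Ω → α) (x : α) (y : β) :
    prOf μ X x * condPrOf μ Y X x y = prOf μ (fun ω => (Y ω, X ω)) (y, x) := by
  refine mul_div_cancel_of_imp' fun hx => le_antisymm ?_ (prOf_nonneg _ _)
  exact hx ▸ prOf_le_prOf_comp (fun ω => (Y ω, X ω)) Prod.snd (y, x)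

lemma condIndepGiven_comp_iff (X : Ω → α) (Y : Ω → β) (h : α → γ) :
    CondIndepGiven μ X Y (fun ω => h (X ω)) ↔
      ∀ x ∈ supportOf μ X, condPrOf μ Y X x = condPrOf μ Y (fun ω => h (X ω)) (h x) := by
  have hgraph (x : α) : prOf μ (fun ω => (X ω, h (X ω))) (x, h x) = prOf μ X x :=
    prOf_comp_of_injective X (e := fun x => (x, h x)) (fun _ _ he => congrArg Prod.fst he) x
  have htriple (x : α) (y : β) : prOf μ (fun ω => (X ω, Y ω, h (X ω))) (x, y, h x) =
      prOf μ X x * condPrOf μ Y X x y := by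
    have he : Function.Injective fun z : β × α => (z.2, z.1, h z.2) := fun _ _ he =>
      Prod.ext (congrArg (·.2.1) he) (congrArg Prod.fst he)
    rw [prOf_mul_condPrOf]
    exact prOf_comp_of_injective (fun ω => (Y ω, X ω)) he (y, x)
  constructor
  · intro hsuff x hx
    ext y
    have hpos : 0 < prOf μ (fun ω => h (X ω)) (h x) := prOf_comp_pos h hx
    have hfactor := hsuff x y (h x) hpos
    rw [htriple, hgraph, mul_div_right_comm] at hfactor
    exact mul_left_cancel₀ (div_pos hx hpos).ne' hfactor
  · intro hlaw x y t _
    by_cases hxt : h x = t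
    · subst hxt
      rw [htriple, hgraph, mul_div_right_comm]
      rcases prOf_eq_zero_or_mem_supportOf (μ := μ) X x with hx | hx
      · simp only [hx, zero_div, zero_mul]
      · rw [hlaw x hx, condPrOf]
    · have htriple_zero : prOf μ (fun ω => (X ω, Y ω, h (X ω))) (x, y, t) = 0 :=
        prOf_eq_zero_of_forall_ne fun ω hω => by grind
      have hpair_zero : prOf μ (fun ω => (X ω, h (X ω))) (x, t) = 0 :=
        prOf_eq_zero_of_forall_ne fun ω hω => by grind
      rw [htriple_zero, hpair_zero, zero_div, zero_mul]

end PointMass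

section Statistic

variable {Ω 𝒳 𝒴 𝒮 𝒯 : Type*} [MeasurableSpace Ω] {μ : Measure Ω} [IsFiniteMeasure μ]
  [MeasurableSpace 𝒳] [MeasurableSingletonClass 𝒳] {X : Ω → 𝒳}

lemma prOf_comp [Fintype 𝒳] (hX : Measurable X) (h : 𝒳 → 𝒯) (t : 𝒯) :
    prOf μ (fun ω => h (X ω)) t = ∑ x with h x = t, prOf μ X x := by
  have hfibre : (fun ω => h (X ω)) ⁻¹' {t} = X ⁻¹' ({x | h x = t} : Finset 𝒳) := by
    ext ω
    simp
  rw [prOf, hfibre]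
  exact (sum_measureReal_preimage_singleton _ fun x _ => hX (measurableSet_singleton x)).symm

lemma prOf_prodMk_comp [Fintype 𝒳] (hX : Measurable X) (Y : Ω → 𝒴) (h : 𝒳 → 𝒯) (y : 𝒴) (t : 𝒯) :
    prOf μ (fun ω => (Y ω, h (X ω))) (y, t) =
      ∑ x with h x = t, prOf μ (fun ω => (Y ω, X ω)) (y, x) := by
  have hfibre : MeasurableSet ((fun ω => h (X ω)) ⁻¹' {t}) :=
    hX (Set.toFinite (h ⁻¹' {t})).measurableSet
  rw [← prOf_restrict_preimage Y y hfibre, prOf_comp hX]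
  exact Finset.sum_congr rfl fun x _ =>
    prOf_restrict_preimage Y y (hX (measurableSet_singleton x))

lemma condPrOf_comp_eq [Finite 𝒳] (hX : Measurable X) (Y : Ω → 𝒴) {h : 𝒳 → 𝒯}
    (hlaw : FactorsThroughOn (condPrOf μ Y X) h (supportOf μ X)) {x : 𝒳}
    (hx : x ∈ supportOf μ X) :
    condPrOf μ Y (fun ω => h (X ω)) (h x) = condPrOf μ Y X x := by
  have := Fintype.ofFinite 𝒳
  ext y
  have hpos : 0 < prOf μ (fun ω => h (X ω)) (h x) := prOf_comp_pos h hx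
  have hterm : ∀ x', h x' = h x →
      prOf μ (fun ω => (Y ω, X ω)) (y, x') = condPrOf μ Y X x y * prOf μ X x' := by
    intro x' hxx'
    rw [← prOf_mul_condPrOf, mul_comm]
    rcases prOf_eq_zero_or_mem_supportOf (μ := μ) X x' with hx' | hx'
    · simp only [hx', mul_zero]
    · rw [hlaw hx' hx hxx']
  rw [condPrOf, div_eq_iff hpos.ne', prOf_prodMk_comp hX, prOf_comp hX, Finset.mul_sum]
  exact Finset.sum_congr rfl fun x' hx' => hterm x' (Finset.mem_filter.1 hx').2

lemma condIndepGiven_comp_iff_factorsThroughOn [Finite 𝒳] (hX : Measurable X) (Y : Ω → 𝒴)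
    (h : 𝒳 → 𝒯) :
    CondIndepGiven μ X Y (fun ω => h (X ω)) ↔
      FactorsThroughOn (condPrOf μ Y X) h (supportOf μ X) := by
  rw [condIndepGiven_comp_iff]
  constructor
  · intro hlaw x hx x' hx' hxx'
    rw [hlaw x hx, hlaw x' hx', hxx']
  · exact fun hlaw x hx => (condPrOf_comp_eq hX Y hlaw hx).symm

lemma entOf_comp [Fintype 𝒳] [Fintype 𝒯] (hX : Measurable X) (h : 𝒳 → 𝒯) :
    entOf μ (fun ω => h (X ω)) =
      -∑ x, prOf μ X x * Real.log (prOf μ (fun ω => h (X ω)) (h x)) := by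
  rw [entOf, ← Finset.sum_fiberwise Finset.univ h]
  congr 1
  refine Finset.sum_congr rfl fun t _ => ?_
  calc prOf μ (fun ω => h (X ω)) t * Real.log (prOf μ (fun ω => h (X ω)) t)
      = ∑ x with h x = t, prOf μ X x * Real.log (prOf μ (fun ω => h (X ω)) t) := by
        rw [← Finset.sum_mul, ← prOf_comp hX]
    _ = ∑ x with h x = t, prOf μ X x * Real.log (prOf μ (fun ω => h (X ω)) (h x)) :=
        Finset.sum_congr rfl fun x hx => by rw [(Finset.mem_filter.1 hx).2]

lemma entOf_comp_of_injective [Fintype 𝒳] [Fintype 𝒯] (hX : Measurable X) {e : 𝒳 → 𝒯}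
    (he : Function.Injective e) : entOf μ (fun ω => e (X ω)) = entOf μ X := by
  rw [entOf_comp hX, entOf]
  simp only [prOf_comp_of_injective X he]

lemma miOf_comp [Fintype 𝒳] [Fintype 𝒯] (hX : Measurable X) (h : 𝒳 → 𝒯) :
    miOf μ X (fun ω => h (X ω)) = entOf μ (fun ω => h (X ω)) := by
  have hgraph : entOf μ (fun ω => (X ω, h (X ω))) = entOf μ X :=
    entOf_comp_of_injective hX (e := fun x => (x, h x)) fun _ _ hxx' => congrArg Prod.fst hxx'
  rw [miOf, hgraph, add_sub_cancel_left]

lemma prOf_comp_le_prOf_comp [Finite 𝒳] (hX : Measurable X) {f : 𝒳 → 𝒮} {k : 𝒳 → 𝒯}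
    (hkf : FactorsThroughOn k f (supportOf μ X)) {x : 𝒳} (hx : x ∈ supportOf μ X) :
    prOf μ (fun ω => f (X ω)) (f x) ≤ prOf μ (fun ω => k (X ω)) (k x) := by
  have := Fintype.ofFinite 𝒳
  rw [prOf_comp hX, prOf_comp hX, Finset.sum_filter, Finset.sum_filter]
  exact Finset.sum_le_sum fun x' _ => ite_prOf_le_ite_prOf hkf hx x'

lemma eq_of_prOf_comp_eq_prOf_comp [Finite 𝒳] (hX : Measurable X) {f : 𝒳 → 𝒮} {k : 𝒳 → 𝒯}
    (hkf : FactorsThroughOn k f (supportOf μ X)) {x x' : 𝒳} (hx : x ∈ supportOf μ X)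
    (hx' : x' ∈ supportOf μ X)
    (heq : prOf μ (fun ω => f (X ω)) (f x) = prOf μ (fun ω => k (X ω)) (k x))
    (hkk' : k x' = k x) : f x' = f x := by
  have := Fintype.ofFinite 𝒳
  rw [prOf_comp hX, prOf_comp hX, Finset.sum_filter, Finset.sum_filter,
    Finset.sum_eq_sum_iff_of_le fun z _ => ite_prOf_le_ite_prOf hkf hx z] at heq
  have hmass := heq x' (Finset.mem_univ x')
  by_contra hne
  rw [if_neg hne, if_pos hkk'] at hmass
  exact (show 0 < prOf μ X x' from hx').ne hmass

lemma FactorsThroughOn.symm_of_entOf_le [Finite 𝒳] [Fintype 𝒮] [Fintype 𝒯] (hX : Measurable X)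
    {f : 𝒳 → 𝒮} {k : 𝒳 → 𝒯} (hkf : FactorsThroughOn k f (supportOf μ X))
    (hent : entOf μ (fun ω => f (X ω)) ≤ entOf μ (fun ω => k (X ω))) :
    FactorsThroughOn f k (supportOf μ X) := by
  have := Fintype.ofFinite 𝒳
  have hpos : ∀ x ∈ supportOf μ X, 0 < prOf μ (fun ω => f (X ω)) (f x) :=
    fun x hx => prOf_comp_pos f hx
  have hle : ∀ x ∈ supportOf μ X,
      prOf μ (fun ω => f (X ω)) (f x) ≤ prOf μ (fun ω => k (X ω)) (k x) :=
    fun x hx => prOf_comp_le_prOf_comp hX hkf hx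
  have hterm : ∀ x ∈ Finset.univ,
      prOf μ X x * Real.log (prOf μ (fun ω => f (X ω)) (f x)) ≤
        prOf μ X x * Real.log (prOf μ (fun ω => k (X ω)) (k x)) := by
    intro x _
    rcases prOf_eq_zero_or_mem_supportOf (μ := μ) X x with hx | hx
    · simp only [hx, zero_mul, le_refl]
    · exact mul_le_mul_of_nonneg_left (Real.log_le_log (hpos x hx) (hle x hx)) (prOf_nonneg X x)
  rw [entOf_comp hX, entOf_comp hX, neg_le_neg_iff] at hent
  have hterm_eq := (Finset.sum_eq_sum_iff_of_le hterm).1 ((Finset.sum_le_sum hterm).antisymm hent)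
  have hmass : ∀ x ∈ supportOf μ X,
      prOf μ (fun ω => f (X ω)) (f x) = prOf μ (fun ω => k (X ω)) (k x) := fun x hx =>
    Real.log_injOn_pos (hpos x hx) ((hpos x hx).trans_le (hle x hx)) <|
      mul_left_cancel₀ (ne_of_gt hx) (hterm_eq x (Finset.mem_univ x))
  exact fun x hx x' hx' hkk' => eq_of_prOf_comp_eq_prOf_comp hX hkf hx' hx (hmass x' hx') hkk'

lemma factorsThroughOn_condPrOf_of_forall_miOf_le [Fintype 𝒳] [Fintype 𝒮] (hX : Measurable X)
    {Y : Ω → 𝒴} {f : 𝒳 → 𝒮} (hsuff : CondIndepGiven μ X Y (fun ω => f (X ω)))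
    (hmin : ∀ (n : ℕ) (m : 𝒳 → Fin n), CondIndepGiven μ X Y (fun ω => m (X ω)) →
      miOf μ X (fun ω => f (X ω)) ≤ miOf μ X (fun ω => m (X ω))) :
    FactorsThroughOn f (condPrOf μ Y X) (supportOf μ X) := by
  obtain ⟨n, m, hm⟩ := exists_fin_eq_iff_eq (condPrOf μ Y X)
  have hlaw_m : FactorsThroughOn (condPrOf μ Y X) m (supportOf μ X) :=
    fun x _ x' _ => (hm x x').1
  have hm_law : FactorsThroughOn m (condPrOf μ Y X) (supportOf μ X) :=
    fun x _ x' _ => (hm x x').2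
  have hlaw_f : FactorsThroughOn (condPrOf μ Y X) f (supportOf μ X) :=
    (condIndepGiven_comp_iff_factorsThroughOn hX Y f).1 hsuff
  have hent : entOf μ (fun ω => f (X ω)) ≤ entOf μ (fun ω => m (X ω)) := by
    rw [← miOf_comp hX, ← miOf_comp hX]
    exact hmin n m ((condIndepGiven_comp_iff_factorsThroughOn hX Y m).2 hlaw_m)
  exact ((hm_law.trans hlaw_f).symm_of_entOf_le hX hent).trans hm_law

end Statistic

theorem stmt6_general {Ω 𝒳 𝒴 𝒮 𝒯 : Type*} [MeasurableSpace Ω]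
    [MeasurableSpace 𝒳] [MeasurableSingletonClass 𝒳] [Fintype 𝒳] [Fintype 𝒮]
    (μ : Measure Ω) [IsFiniteMeasure μ] [NeZero μ]
    (X : Ω → 𝒳) (Y : Ω → 𝒴) (hX : Measurable X) (f : 𝒳 → 𝒮)
    (hsuff : CondIndepGiven μ X Y (fun ω => f (X ω)))
    (hmin : ∀ (n : ℕ) (m : 𝒳 → Fin n), CondIndepGiven μ X Y (fun ω => m (X ω)) →
      miOf μ X (fun ω => f (X ω)) ≤ miOf μ X (fun ω => m (X ω)))
    (h : 𝒳 → 𝒯) (hsuff_h : CondIndepGiven μ X Y (fun ω => h (X ω))) :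
    ∃ g : 𝒯 → 𝒮, ∀ᵐ ω ∂μ, f (X ω) = g (h (X ω)) := by
  have hf_law : FactorsThroughOn f (condPrOf μ Y X) (supportOf μ X) :=
    factorsThroughOn_condPrOf_of_forall_miOf_le hX hsuff hmin
  have hlaw_h : FactorsThroughOn (condPrOf μ Y X) h (supportOf μ X) :=
    (condIndepGiven_comp_iff_factorsThroughOn hX Y h).1 hsuff_h
  have : Nonempty 𝒮 := (Measure.nonempty_of_neZero μ).map fun ω => f (X ω)
  obtain ⟨g, hg⟩ := (hf_law.trans hlaw_h).exists_eqOn_comp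
  exact ⟨g, (ae_mem_supportOf X).mono fun ω hω => hg hω⟩

/-- A sufficient statistic `S = f(X)` achieving the minimum of `I(X;T)` over all
sufficient statistics `T = h(X)` is minimal: every sufficient statistic `T = h(X)`
determines `S` via some `g` with `S = g(T)` μ-almost surely. -/
theorem stmt6 {Ω 𝒳 𝒴 𝒮 : Type*} [MeasurableSpace Ω]
    [MeasurableSpace 𝒳] [MeasurableSingletonClass 𝒳]
    [MeasurableSpace 𝒴] [MeasurableSingletonClass 𝒴]
    [Fintype 𝒳] [Fintype 𝒴] [Fintype 𝒮]
    (μ : Measure Ω) [IsProbabilityMeasure μ]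
    (X : Ω → 𝒳) (Y : Ω → 𝒴) (hX : Measurable X) (hY : Measurable Y)
    (f : 𝒳 → 𝒮)
    (hsuff : CondIndepGiven μ X Y (fun ω => f (X ω)))
    (hmin : ∀ (𝒯 : Type) [Fintype 𝒯] (h : 𝒳 → 𝒯),
      CondIndepGiven μ X Y (fun ω => h (X ω)) →
      miOf μ X (fun ω => f (X ω)) ≤ miOf μ X (fun ω => h (X ω))) :
    ∀ (𝒯 : Type) [Fintype 𝒯] (h : 𝒳 → 𝒯),
      CondIndepGiven μ X Y (fun ω => h (X ω)) →
      ∃ g : 𝒯 → 𝒮, ∀ᵐ ω ∂μ, f (X ω) = g (h (X ω)) := by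
  exact fun _ _ h => stmt6_general μ X Y hX f hsuff (fun n => hmin (Fin n)) h
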